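/- For any ADF D there exists n ∈ ℕ such that Γ_D^n(v_u) is a fixed point of Γ_D, and this fixed point is the least fixed point of Γ_D: every interpretation v of D with Γ_D(v) = v satisfies Γ_D^n(v_u) ≤_i v. In particular, Γ_D has a least fixed point, the grounded interpretation grd(D). -/

import Mathlib

/-!
The operator `Gamma D` is monotone for the information order: refining an interpretation shrinks
its set of completions, which stays nonempty, so irrefutable and unsatisfiable conditions keep
their status and the two never hold together (`Gamma_mono`). Since `trivialInterp A` is the least
interpretation, its iterates form an ascending chain (`iterate_ILE_add`) that stays below every
fixed point. There are only finitely many interpretations, so two iterates coincide; by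
antisymmetry the chain is constant between them, which gives a fixed point.
-/

/-- Three truth values: true, false, undecided. -/
inductive TV : Type
  | t | f | u
deriving DecidableEq, Repr

/-- The information order on truth values: u <_i t and u <_i f. -/
def TV.ile (x y : TV) : Prop := x = TV.u ∨ x = y

/-- The information order on interpretations, extended pointwise. -/
def ILE {A : Type*} (v w : A → TV) : Prop := ∀ a, TV.ile (v a) (w a)

/-- An abstract dialectical framework on a set of arguments `A`:
each argument `a` has an acceptance condition `C a : (A → Bool) → Bool`. -/
structure ADF (A : Type*) where
  C : A → (A → Bool) → Bool

/-- The trivial interpretation mapping every argument to undecided. -/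
def trivialInterp (A : Type*) : A → TV := fun _ => TV.u

/-- The parents of `a` are the arguments on which its acceptance condition depends. -/
def ADF.parents {A : Type*} [DecidableEq A] (D : ADF A) (a : A) : Set A :=
  {b | ∃ w : A → Bool, D.C a w ≠ D.C a (Function.update w b (!w b))}

/-- A two-valued assignment `w` completes a three-valued interpretation `v`. -/
def Completes {A : Type*} (w : A → Bool) (v : A → TV) : Prop :=
  ∀ b, (v b = TV.t → w b = true) ∧ (v b = TV.f → w b = false)

/-- `φ` is irrefutable under `v`: every completion of `v` makes `φ` true. -/
def Irrefutable {A : Type*} (φ : (A → Bool) → Bool) (v : A → TV) : Prop :=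
  ∀ w : A → Bool, Completes w v → φ w = true

/-- `φ` is unsatisfiable under `v`: every completion of `v` makes `φ` false. -/
def Unsat {A : Type*} (φ : (A → Bool) → Bool) (v : A → TV) : Prop :=
  ∀ w : A → Bool, Completes w v → φ w = false

open Classical in
/-- The characteristic operator Γ_D of an ADF. -/
noncomputable def Gamma {A : Type*} (D : ADF A) (v : A → TV) : A → TV := fun a =>
  if Irrefutable (D.C a) v then TV.t
  else if Unsat (D.C a) v then TV.f
  else TV.u

open Classical in
/-- `v|_P`: agrees with `v` on `P` and is undecided elsewhere. -/
noncomputable def restrictTV {A : Type*} (v : A → TV) (P : Set A) : A → TV :=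
  fun b => if b ∈ P then v b else TV.u

/-- Strong acceptability/deniability of an argument with respect to interpretation `v`
and set `S`, relative to an excluded set `E` (the first index). An argument `a` with
`v a = t` (resp. `v a = f`) is strongly acceptable (resp. strongly deniable) iff there is
`P ⊆ (parents a ∩ S) \ E` with `φ_a^{v|_P}` irrefutable (resp. unsatisfiable) and every
`p ∈ P` strongly acceptable/deniable relative to `E ∪ {p}`. -/
inductive SJrel {A : Type*} [DecidableEq A] (D : ADF A) (v : A → TV) (S : Set A) :
    Set A → A → Prop
  | acc (E : Set A) (a : A) (P : Set A)
      (ha : v a = TV.t)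
      (hP : P ⊆ (D.parents a ∩ S) \ E)
      (hirr : Irrefutable (D.C a) (restrictTV v P))
      (hrec : ∀ p ∈ P, SJrel D v S (E ∪ {p}) p) : SJrel D v S E a
  | den (E : Set A) (a : A) (P : Set A)
      (ha : v a = TV.f)
      (hP : P ⊆ (D.parents a ∩ S) \ E)
      (hunsat : Unsat (D.C a) (restrictTV v P))
      (hrec : ∀ p ∈ P, SJrel D v S (E ∪ {p}) p) : SJrel D v S E a

/-- `a` is strongly acceptable/deniable w.r.t. `v` and `S`
(i.e., relative to the excluded set `{a}`). -/
def StronglyJustified {A : Type*} [DecidableEq A] (D : ADF A) (v : A → TV)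
    (S : Set A) (a : A) : Prop :=
  SJrel D v S {a} a

/-- `S` is a least set for `a` with respect to `v`. -/
def LeastSet {A : Type*} [DecidableEq A] (D : ADF A) (v : A → TV)
    (a : A) (S : Set A) : Prop :=
  StronglyJustified D v S a ∧
  ∀ S' : Set A, S'.ncard < S.ncard → ¬ StronglyJustified D v S' a

/-- An interpretation is strongly admissible iff every argument assigned `t`/`f`
is strongly acceptable/deniable w.r.t. `v` and some set `S`. -/
def StronglyAdmissible {A : Type*} [DecidableEq A] (D : ADF A) (v : A → TV) : Prop :=
  ∀ a : A, v a ≠ TV.u → ∃ S : Set A, StronglyJustified D v S a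

/-- `g` is the grounded interpretation of `D`: the least fixed point of `Γ_D`. -/
def IsGrounded {A : Type*} (D : ADF A) (g : A → TV) : Prop :=
  Gamma D g = g ∧ ∀ w : A → TV, Gamma D w = w → ILE g w

/-- An interpretation is admissible iff `v ≤_i Γ_D(v)`. -/
def Admissible {A : Type*} (D : ADF A) (v : A → TV) : Prop :=
  ILE v (Gamma D v)

/-- An interpretation is conflict-free. -/
def ConflictFree {A : Type*} (D : ADF A) (v : A → TV) : Prop :=
  ∀ a : A, (v a = TV.t → ∃ w : A → Bool, Completes w v ∧ D.C a w = true) ∧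
           (v a = TV.f → Unsat (D.C a) v)

/-- The join of two interpretations: take `v`'s value where defined, else `w`'s. -/
def joinI {A : Type*} (v w : A → TV) : A → TV :=
  fun a => if v a = TV.u then w a else v a

lemma ILE.trans {A : Type*} {x y z : A → TV} (hxy : ILE x y) (hyz : ILE y z) : ILE x z := by
  intro a
  rcases hxy a with h | h
  · exact Or.inl h
  · have := hyz a
    rwa [← h] at this

lemma ILE.antisymm {A : Type*} {x y : A → TV} (hxy : ILE x y) (hyx : ILE y x) : x = y := by
  funext a
  rcases hxy a with h | h
  · rcases hyx a with h' | h'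
    · rw [h, h']
    · exact h'.symm
  · exact h

lemma trivialInterp_ILE {A : Type*} (v : A → TV) : ILE (trivialInterp A) v := fun _ => Or.inl rfl

lemma Completes.of_ILE {A : Type*} {w : A → Bool} {x y : A → TV} (hxy : ILE x y)
    (hw : Completes w y) : Completes w x := by
  intro b
  have h := hxy b
  have h' := hw b
  unfold TV.ile at h
  grind

lemma exists_completes {A : Type*} (v : A → TV) : ∃ w : A → Bool, Completes w v :=
  ⟨fun b => decide (v b = TV.t), fun b => by grind⟩

lemma Gamma_mono {A : Type*} (D : ADF A) {x y : A → TV} (hxy : ILE x y) :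
    ILE (Gamma D x) (Gamma D y) := by
  intro a
  by_cases hI : Irrefutable (D.C a) x
  · have hI' : Irrefutable (D.C a) y := fun w hw => hI w (hw.of_ILE hxy)
    exact Or.inr (by simp [Gamma, hI, hI'])
  · by_cases hU : Unsat (D.C a) x
    · have hU' : Unsat (D.C a) y := fun w hw => hU w (hw.of_ILE hxy)
      -- A completion of `y` rules out that the condition is also irrefutable under `y`.
      have hI' : ¬ Irrefutable (D.C a) y := by
        intro h
        obtain ⟨w, hw⟩ := exists_completes y
        simpa [hU' w hw] using h w hw
      exact Or.inr (by simp [Gamma, hI, hI', hU, hU'])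
    · exact Or.inl (by simp [Gamma, hI, hU])

lemma iterate_ILE_succ {A : Type*} (D : ADF A) (n : ℕ) :
    ILE ((Gamma D)^[n] (trivialInterp A)) ((Gamma D)^[n + 1] (trivialInterp A)) := by
  induction n with
  | zero => exact trivialInterp_ILE _
  | succ n ih =>
    simp only [Function.iterate_succ_apply'] at ih ⊢
    exact Gamma_mono D ih

lemma iterate_ILE_add {A : Type*} (D : ADF A) (m k : ℕ) :
    ILE ((Gamma D)^[m] (trivialInterp A)) ((Gamma D)^[m + k] (trivialInterp A)) := by
  induction k with
  | zero => exact fun _ => Or.inr rfl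
  | succ k ih => exact ih.trans (iterate_ILE_succ D (m + k))

lemma iterate_ILE_of_fixed {A : Type*} (D : ADF A) {v : A → TV} (hv : Gamma D v = v) (n : ℕ) :
    ILE ((Gamma D)^[n] (trivialInterp A)) v := by
  induction n with
  | zero => exact trivialInterp_ILE v
  | succ n ih =>
    have h := Gamma_mono D ih
    rwa [hv, ← Function.iterate_succ_apply' (Gamma D)] at h

instance TV.instFinite : Finite TV :=
  Finite.of_surjective (fun i : Fin 3 => (![TV.t, TV.f, TV.u] : Fin 3 → TV) i) (by
    rintro (_ | _ | _)
    exacts [⟨0, rfl⟩, ⟨1, rfl⟩, ⟨2, rfl⟩])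

/-- Iterating Γ_D from the trivial interpretation reaches a fixed point,
which is the least fixed point of Γ_D (the grounded interpretation). -/
theorem gamma_least_fixed_point {A : Type*} [Fintype A] [DecidableEq A] (D : ADF A) :
    ∃ n : ℕ, Gamma D ((Gamma D)^[n] (trivialInterp A)) = (Gamma D)^[n] (trivialInterp A) ∧
      ∀ v : A → TV, Gamma D v = v → ILE ((Gamma D)^[n] (trivialInterp A)) v := by
  obtain ⟨i, j, hij, heq⟩ : ∃ i j : ℕ, i < j ∧
      (Gamma D)^[i] (trivialInterp A) = (Gamma D)^[j] (trivialInterp A) := by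
    obtain ⟨i, j, hne, heq⟩ := Finite.exists_ne_map_eq_of_infinite
      (fun n : ℕ => (Gamma D)^[n] (trivialInterp A))
    rcases lt_or_gt_of_ne hne with h | h
    exacts [⟨i, j, h, heq⟩, ⟨j, i, h, heq.symm⟩]
  refine ⟨i, ?_, fun v hv => iterate_ILE_of_fixed D hv i⟩
  obtain ⟨k, rfl⟩ := Nat.exists_eq_add_of_le (Nat.succ_le_of_lt hij)
  rw [← Function.iterate_succ_apply' (Gamma D)]
  refine ILE.antisymm ?_ (iterate_ILE_succ D i)
  have h := iterate_ILE_add D (i + 1) k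
  rwa [← heq] at h
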